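/- Let n, m ∈ ℕ with m ≤ n−1, let ã₀,…,ã_{n−2} be complex numbers with |ã_j| < 1, let Φ̃_j be generated by Φ̃₀ = 1 and Φ̃_j(z) = zΦ̃_{j−1}(z) − ã_{j−1}Φ̃*_{j−1}(z), and let Ψ̃_j be generated by Ψ̃₀ = 1 and Ψ̃_j(z) = zΨ̃_{j−1}(z) + ã_{j−1}Ψ̃*_{j−1}(z). Fix η ∈ 𝕋 and define q₀(z) = 1 and q_j(z) = z q_{j−1}(z) − η·conj(ã_{n−1−j})·q*_{j−1}(z) for j = 1,…,m. Then for every j = 1,…,m, z Φ̃_{n−1} + η Φ̃*_{n−1} = z q_j Φ̃_{n−1−j} + η q_j* Φ̃*_{n−1−j} and z Ψ̃_{n−1} − η Ψ̃*_{n−1} = z q_j Ψ̃_{n−1−j} − η q_j* Ψ̃*_{n−1−j}, where q_j has degree j; moreover each q_j has all its zeros in the open unit disk 𝔻. -/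

import Mathlib

/-!
If `deg P ≤ n` and `S = z P - a P*`, then `S* = P* - conj a · z P` at degree `n + 1`. Expanding the
pairing `z Q P + η Q* P*` after one step in `P` and regrouping it around `P` and `P*` moves the step
from `P` with parameter `a` to `Q` with parameter `η conj a`, because `η conj η = 1`. Iterating
transfers the recursion for `Φ` to `q` one step at a time, from the last parameter down. The
polynomials `Ψ` are generated by the parameters `-a`; replacing `(a, η)` by `(-a, -η)` leaves
`η conj a`, hence `q`, unchanged.

For the zeros, `|S|² - |S*|² = (1 - |a|²)(|z P|² - |P*|²)` shows that, at every point outside the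
open disk, the conditions `|P*| ≤ |P|` and `P ≠ 0` persist along the recursion.
-/

open Polynomial

/-- The reversed polynomial `P*(z) = z^n conj(P(1/conj z))` at degree `n`. -/
noncomputable def pstar (n : ℕ) (P : Polynomial ℂ) : Polynomial ℂ :=
  Polynomial.reflect n (P.map (starRingEnd ℂ))

open ComplexConjugate

section Reversal

variable {n : ℕ} {P : ℂ[X]}

lemma pstar_zero_one : pstar 0 1 = 1 := by
  simp [pstar]

lemma pstar_pstar (n : ℕ) (P : ℂ[X]) : pstar n (pstar n P) = P := by
  ext i
  simp [pstar, coeff_reflect]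

lemma pstar_sub (n : ℕ) (P Q : ℂ[X]) : pstar n (P - Q) = pstar n P - pstar n Q := by
  simp only [pstar, Polynomial.map_sub, reflect_sub]

lemma pstar_C_mul (n : ℕ) (a : ℂ) (P : ℂ[X]) : pstar n (C a * P) = C (conj a) * pstar n P := by
  simp only [pstar, Polynomial.map_mul, map_C, reflect_C_mul]

lemma natDegree_pstar_le (hP : P.natDegree ≤ n) : (pstar n P).natDegree ≤ n :=
  natDegree_reflect_le.trans (max_le le_rfl (natDegree_map_le.trans hP))

lemma pstar_succ (hP : P.natDegree ≤ n) : pstar (n + 1) P = X * pstar n P := by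
  have h := reflect_mul (P.map conj) 1 (natDegree_map_le.trans hP)
    (natDegree_one.trans_le zero_le_one)
  rwa [mul_one, reflect_one, pow_one, mul_comm] at h

lemma pstar_succ_X_mul (hP : P.natDegree ≤ n) : pstar (n + 1) (X * P) = pstar n P := by
  rw [← pstar_pstar n P, ← pstar_succ (natDegree_pstar_le hP), pstar_pstar, pstar_pstar]

end Reversal

/-- The Szegő step `P ↦ z P - a P*`, which raises the degree from `n` to `n + 1`. The parameter `a`
is not conjugated, so it is the complex conjugate of the usual Verblunsky coefficient. -/
noncomputable def szegoStep (n : ℕ) (a : ℂ) (P : ℂ[X]) : ℂ[X] :=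
  X * P - C a * pstar n P

/-- The pairing `z Q P + η Q* P*`, with `Q` reversed at degree `i` and `P` at degree `k`.
For `Q = 1` and `i = 0` it is the para-orthogonal polynomial `z P + η P*`. -/
noncomputable def szegoPairing (η : ℂ) (i k : ℕ) (Q P : ℂ[X]) : ℂ[X] :=
  X * Q * P + C η * pstar i Q * pstar k P

lemma norm_sub_mul_sq_sub_norm_sub_conj_mul_sq {𝕜 : Type*} [RCLike 𝕜] (a v w : 𝕜) :
    ‖w - a * v‖ ^ 2 - ‖v - conj a * w‖ ^ 2 = (1 - ‖a‖ ^ 2) * (‖w‖ ^ 2 - ‖v‖ ^ 2) := by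
  have hcross : RCLike.re (v * conj (conj a * w)) = RCLike.re (w * conj (a * v)) := by
    rw [← RCLike.conj_re]
    congr 1
    simp only [map_mul, RCLike.conj_conj]
    ring
  simp only [← RCLike.normSq_eq_def']
  rw [RCLike.normSq_sub, RCLike.normSq_sub, hcross, RCLike.normSq.map_mul, RCLike.normSq.map_mul,
    RCLike.normSq_conj]
  ring

lemma norm_le_norm_mul_of_one_le {R : Type*} [NormedDivisionRing R] {z : R} (hz : 1 ≤ ‖z‖)
    (u : R) : ‖u‖ ≤ ‖z * u‖ := by
  rw [norm_mul]
  exact le_mul_of_one_le_left (norm_nonneg _) hz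

section Step

variable {n : ℕ} {P : ℂ[X]}

lemma pstar_szegoStep (hP : P.natDegree ≤ n) (a : ℂ) :
    pstar (n + 1) (szegoStep n a P) = pstar n P - C (conj a) * (X * P) := by
  rw [szegoStep, pstar_sub, pstar_C_mul, pstar_succ_X_mul hP,
    pstar_succ (natDegree_pstar_le hP), pstar_pstar]

lemma degree_szegoStep (hP : P.degree = n) (a : ℂ) :
    (szegoStep n a P).degree = ((n + 1 : ℕ) : WithBot ℕ) := by
  have hXP : (X * P).degree = ((n + 1 : ℕ) : WithBot ℕ) := by
    rw [mul_comm, degree_mul_X, hP, Nat.cast_succ]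
  have hstar : (C a * pstar n P).degree ≤ n :=
    natDegree_le_iff_degree_le.mp <| (natDegree_C_mul_le _ _).trans <|
      natDegree_pstar_le (natDegree_le_of_degree_le hP.le)
  rw [szegoStep, degree_sub_eq_left_of_degree_lt, hXP]
  rw [hXP]
  exact hstar.trans_lt (by exact_mod_cast n.lt_succ_self)

lemma szegoPairing_szegoStep {i k : ℕ} {η : ℂ} {Q : ℂ[X]} (hη : ‖η‖ = 1)
    (hQ : Q.natDegree ≤ i) (hP : P.natDegree ≤ k) (a : ℂ) :
    szegoPairing η i (k + 1) Q (szegoStep k a P) =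
      szegoPairing η (i + 1) k (szegoStep i (η * conj a) Q) P := by
  have hηη : C η * C (conj η) = (1 : ℂ[X]) := by
    rw [← C_mul, Complex.mul_conj', hη, Complex.ofReal_one, one_pow, C_1]
  rw [szegoPairing, szegoPairing, pstar_szegoStep hQ, pstar_szegoStep hP]
  simp only [szegoStep, map_mul, Complex.conj_conj]
  linear_combination (X * Q * C a * pstar k P) * hηη

lemma eval_szegoStep_ne_zero {a z : ℂ} (ha : ‖a‖ < 1) (hz : 1 ≤ ‖z‖) (hPz : P.eval z ≠ 0)
    (hstar : ‖(pstar n P).eval z‖ ≤ ‖P.eval z‖) : (szegoStep n a P).eval z ≠ 0 := by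
  have hlt : ‖a * (pstar n P).eval z‖ < ‖z * P.eval z‖ := calc
    ‖a * (pstar n P).eval z‖ ≤ ‖a‖ * ‖P.eval z‖ := by rw [norm_mul]; gcongr
    _ < ‖P.eval z‖ := mul_lt_of_lt_one_left (norm_pos_iff.mpr hPz) ha
    _ ≤ ‖z * P.eval z‖ := norm_le_norm_mul_of_one_le hz _
  simp only [szegoStep, eval_sub, eval_mul, eval_X, eval_C]
  exact sub_ne_zero.mpr fun h => hlt.ne' (congrArg norm h)

lemma norm_eval_pstar_szegoStep_le {a z : ℂ} (hP : P.natDegree ≤ n) (ha : ‖a‖ ≤ 1)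
    (hz : 1 ≤ ‖z‖) (hstar : ‖(pstar n P).eval z‖ ≤ ‖P.eval z‖) :
    ‖(pstar (n + 1) (szegoStep n a P)).eval z‖ ≤ ‖(szegoStep n a P).eval z‖ := by
  have hle : ‖(pstar n P).eval z‖ ≤ ‖z * P.eval z‖ :=
    hstar.trans (norm_le_norm_mul_of_one_le hz _)
  rw [pstar_szegoStep hP]
  simp only [szegoStep, eval_sub, eval_mul, eval_X, eval_C]
  rw [← sq_le_sq₀ (norm_nonneg _) (norm_nonneg _), ← sub_nonneg,
    norm_sub_mul_sq_sub_norm_sub_conj_mul_sq]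
  refine mul_nonneg (sub_nonneg.mpr (pow_le_one₀ (norm_nonneg _) ha)) (sub_nonneg.mpr ?_)
  gcongr

end Step

/-- The polynomials `P 0, …, P N` are generated from `1` by Szegő steps with the parameters
`α 0, …, α (N - 1)`. All other values of `P` and `α` are unconstrained. -/
structure IsSzegoSeq (N : ℕ) (α : ℕ → ℂ) (P : ℕ → ℂ[X]) : Prop where
  zero : P 0 = 1
  succ : ∀ j < N, P (j + 1) = szegoStep j (α j) (P j)

namespace IsSzegoSeq

variable {N : ℕ} {α : ℕ → ℂ} {P : ℕ → ℂ[X]}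

lemma degree_eq (h : IsSzegoSeq N α P) {j : ℕ} (hj : j ≤ N) : (P j).degree = j := by
  induction j with
  | zero => rw [h.zero, degree_one, Nat.cast_zero]
  | succ j ih => rw [h.succ j hj, degree_szegoStep (ih (Nat.le_of_succ_le hj))]

lemma natDegree_eq (h : IsSzegoSeq N α P) {j : ℕ} (hj : j ≤ N) : (P j).natDegree = j :=
  natDegree_eq_of_degree_eq_some (h.degree_eq hj)

lemma eval_ne_zero_and_norm_eval_pstar_le (h : IsSzegoSeq N α P) (hα : ∀ j < N, ‖α j‖ < 1)
    {z : ℂ} (hz : 1 ≤ ‖z‖) {j : ℕ} (hj : j ≤ N) :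
    (P j).eval z ≠ 0 ∧ ‖(pstar j (P j)).eval z‖ ≤ ‖(P j).eval z‖ := by
  induction j with
  | zero => simp [h.zero, pstar_zero_one]
  | succ j ih =>
    have hjN : j ≤ N := Nat.le_of_succ_le hj
    obtain ⟨hne, hle⟩ := ih hjN
    rw [h.succ j hj]
    exact ⟨eval_szegoStep_ne_zero (hα j hj) hz hne hle,
      norm_eval_pstar_szegoStep_le (h.natDegree_eq hjN).le (hα j hj).le hz hle⟩

lemma norm_lt_one_of_eval_eq_zero (h : IsSzegoSeq N α P) (hα : ∀ j < N, ‖α j‖ < 1) {j : ℕ}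
    (hj : j ≤ N) {z : ℂ} (hPz : (P j).eval z = 0) : ‖z‖ < 1 :=
  lt_of_not_ge fun hz => (h.eval_ne_zero_and_norm_eval_pstar_le hα hz hj).1 hPz

lemma szegoPairing_eq {m : ℕ} {η : ℂ} {Q : ℕ → ℂ[X]} (hP : IsSzegoSeq N α P)
    (hQ : IsSzegoSeq m (fun j => η * conj (α (N - (j + 1)))) Q) (hη : ‖η‖ = 1) (hmN : m ≤ N)
    {j : ℕ} (hj : j ≤ m) :
    X * P N + C η * pstar N (P N) = szegoPairing η j (N - j) (Q j) (P (N - j)) := by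
  induction j with
  | zero => simp [szegoPairing, hQ.zero, pstar_zero_one]
  | succ j ih =>
    obtain ⟨k, rfl⟩ : ∃ k, N = k + (j + 1) := Nat.exists_eq_add_of_le' (hj.trans hmN)
    have hk : k + (j + 1) - j = k + 1 := by omega
    rw [ih (Nat.le_of_succ_le hj), hk, hQ.succ j hj, Nat.add_sub_cancel, hP.succ k (by omega)]
    exact szegoPairing_szegoStep hη (hQ.natDegree_eq (Nat.le_of_succ_le hj)).le
      (hP.natDegree_eq (by omega)).le (α k)

end IsSzegoSeq

theorem stmt7
    (n m : ℕ) (hn : 1 ≤ n) (hm : 1 ≤ m) (hmn : m ≤ n - 1)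
    (a : ℕ → ℂ) (ha : ∀ j < n - 1, ‖a j‖ < 1)
    (Φt : ℕ → Polynomial ℂ) (hΦt0 : Φt 0 = 1)
    (hΦtrec : ∀ j < n - 1, Φt (j + 1) = X * Φt j - C (a j) * pstar j (Φt j))
    (Ψt : ℕ → Polynomial ℂ) (hΨt0 : Ψt 0 = 1)
    (hΨtrec : ∀ j < n - 1, Ψt (j + 1) = X * Ψt j + C (a j) * pstar j (Ψt j))
    (η : ℂ) (hη : ‖η‖ = 1)
    (q : ℕ → Polynomial ℂ) (hq0 : q 0 = 1)
    (hqrec : ∀ j, 1 ≤ j → j ≤ m →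
      q j = X * q (j - 1) -
        C (η * (starRingEnd ℂ) (a (n - 1 - j))) * pstar (j - 1) (q (j - 1))) :
    ∀ j, 1 ≤ j → j ≤ m →
      (X * Φt (n - 1) + C η * pstar (n - 1) (Φt (n - 1)) =
        X * q j * Φt (n - 1 - j) +
          C η * pstar j (q j) * pstar (n - 1 - j) (Φt (n - 1 - j))) ∧
      (X * Ψt (n - 1) - C η * pstar (n - 1) (Ψt (n - 1)) =
        X * q j * Ψt (n - 1 - j) -
          C η * pstar j (q j) * pstar (n - 1 - j) (Ψt (n - 1 - j))) ∧
      (q j).natDegree = j ∧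
      (∀ z : ℂ, (q j).eval z = 0 → ‖z‖ < 1) := by
  have hΦ : IsSzegoSeq (n - 1) a Φt := ⟨hΦt0, hΦtrec⟩
  have hΨ : IsSzegoSeq (n - 1) (-a) Ψt :=
    ⟨hΨt0, fun j hj => by simp [szegoStep, hΨtrec j hj]⟩
  have hq : IsSzegoSeq m (fun j => η * conj (a (n - 1 - (j + 1)))) q :=
    ⟨hq0, fun j hj => hqrec (j + 1) j.succ_pos hj⟩
  have hq_neg : IsSzegoSeq m (fun j => -η * conj ((-a) (n - 1 - (j + 1)))) q := by
    simpa only [Pi.neg_apply, map_neg, neg_mul_neg] using hq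
  have hq_norm : ∀ j < m, ‖η * conj (a (n - 1 - (j + 1)))‖ < 1 := fun j hj => by
    rw [norm_mul, hη, one_mul, RCLike.norm_conj]
    exact ha _ (by omega)
  intro j _ hj
  refine ⟨hΦ.szegoPairing_eq hq hη hmn hj, ?_, hq.natDegree_eq hj,
    fun _ => hq.norm_lt_one_of_eval_eq_zero hq_norm hj⟩
  simpa only [szegoPairing, C_neg, neg_mul, ← sub_eq_add_neg] using
    hΨ.szegoPairing_eq hq_neg (by rwa [norm_neg]) hmn hj
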